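/- Let $\mu>0$ and $\delta>0$ be real constants and set $t_o:=\frac{2\delta}{\sqrt{4\delta^2+\mu^2}}$. Define $\widetilde{R}(s,t):=\dfrac{(1-t^2)^2\big[2(\mu^2+4\delta^2)(1-5s^2)t^2+3\mu^2s^4+4(\mu^2+10\delta^2)s^2+\mu^2-8\delta^2\big]}{\mu(1+s^2)^4}$. Then at every interior point of $\widetilde{D}:=\{(s,t):0\le t\le t_o,\ |s|\le t\}$, i.e. for every $(s,t)$ with $0<t<t_o$ and $|s|<t$, the gradient $\big(\partial_s\widetilde{R}(s,t),\partial_t\widetilde{R}(s,t)\big)\ne(0,0)$; consequently the maximum and minimum of $\widetilde{R}$ on $\widetilde{D}$ are attained on the boundary of $\widetilde{D}$. -/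

import Mathlib

/-- The two-variable flag-curvature function (formula (47) of the paper) of `F₀⁺`. -/
noncomputable def Rplus (μ δ s t : ℝ) : ℝ :=
  ((1 - t ^ 2) ^ 2 *
      (2 * (μ ^ 2 + 4 * δ ^ 2) * (1 - 5 * s ^ 2) * t ^ 2 + 3 * μ ^ 2 * s ^ 4
        + 4 * (μ ^ 2 + 10 * δ ^ 2) * s ^ 2 + μ ^ 2 - 8 * δ ^ 2)) /
    (μ * (1 + s ^ 2) ^ 4)

/-!
With `a = s²`, `m = μ²` and `v = (μ² + 4δ²)(1 - t²)`, away from `t = 0` and `t² = 1` the partial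
derivative in `t` vanishes iff `v (1 - 5a) = m (1 - a)²`, and the one in `s` vanishes iff `s = 0` or
`v (3 - 5a) = m (1 - a)(3 - a)`. Half the difference of the two equations is `v = m (1 - a)`, and
then the first one leaves `4 a v = 0`, so `s = 0` in either case. At `s = 0` the first equation
reads `v = m`, which is `t² = t_o²`. Thus no critical point lies in the strip `0 < t < t_o`.
-/

lemma eq_zero_of_critical_equations {K : Type*} [CommRing K] [NoZeroDivisors K] [NeZero (2 : K)]
    {a m v : K} (hv : v ≠ 0) (h₁ : v * (1 - 5 * a) = m * (1 - a) ^ 2)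
    (h₂ : v * (3 - 5 * a) = m * (1 - a) * (3 - a)) : a = 0 := by
  have hvm : v = m * (1 - a) :=
    mul_left_cancel₀ (two_ne_zero' K) (by linear_combination h₂ - h₁)
  have hav : 2 * (2 * (v * a)) = 0 := by linear_combination (1 - a) * hvm - h₁
  simpa [two_ne_zero' K, hv] using hav

lemma mul_sq_lt_sq_of_lt_div_sqrt {a k t : ℝ} (hk : 0 < k) (ht : 0 ≤ t) (h : t < a / √k) :
    k * t ^ 2 < a ^ 2 := by
  have hlt : t * √k < a := (lt_div_iff₀ (Real.sqrt_pos.2 hk)).1 h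
  calc k * t ^ 2 = (t * √k) ^ 2 := by rw [mul_pow, Real.sq_sqrt hk.le, mul_comm]
    _ < a ^ 2 := by gcongr

lemma frontier_truncated_cone_subset (T : ℝ) :
    frontier {q : ℝ × ℝ | 0 ≤ q.2 ∧ q.2 ≤ T ∧ |q.1| ≤ q.2} ⊆ {q | |q.1| = q.2 ∨ q.2 = T} := by
  have hinter : {q : ℝ × ℝ | 0 ≤ q.2 ∧ q.2 ≤ T ∧ |q.1| ≤ q.2} =
      {q | |q.1| ≤ q.2} ∩ {q | q.2 ≤ T} := by
    ext q
    exact ⟨fun h => ⟨h.2.2, h.2.1⟩, fun h => ⟨(abs_nonneg _).trans h.1, h.2, h.1⟩⟩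
  rw [hinter]
  exact (frontier_inter_subset _ _).trans <| Set.union_subset_union
    (Set.inter_subset_left.trans (frontier_le_subset_eq continuous_fst.abs continuous_snd))
    (Set.inter_subset_right.trans (frontier_le_subset_eq continuous_snd continuous_const))

namespace Rplus

lemma eq_div_div (μ δ s t : ℝ) :
    Rplus μ δ s t = (1 - t ^ 2) ^ 2 *
      (2 * ((μ ^ 2 + 4 * δ ^ 2) * (1 - t ^ 2)) * (5 * s ^ 2 - 1) + 3 * μ ^ 2 * (1 - s ^ 2) ^ 2) /
        (1 + s ^ 2) ^ 4 / μ := by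
  rw [Rplus, div_div, mul_comm _ μ]
  ring

lemma hasDerivAt_fst (μ δ s t : ℝ) :
    HasDerivAt (fun x => Rplus μ δ x t)
      (12 * s * (1 - t ^ 2) ^ 2 * ((μ ^ 2 + 4 * δ ^ 2) * (1 - t ^ 2) * (3 - 5 * s ^ 2)
        - μ ^ 2 * (1 - s ^ 2) * (3 - s ^ 2)) / (1 + s ^ 2) ^ 5 / μ) s := by
  simp only [eq_div_div]
  have hs : 1 + s ^ 2 ≠ 0 := by positivity
  have hsq : HasDerivAt (fun x : ℝ => x ^ 2) (2 * s) s := by simpa using hasDerivAt_pow 2 s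
  have hnum := ((((hsq.const_mul 5).sub_const 1).const_mul
    (2 * ((μ ^ 2 + 4 * δ ^ 2) * (1 - t ^ 2)))).fun_add
      (((hsq.const_sub 1).fun_pow 2).const_mul (3 * μ ^ 2))).const_mul ((1 - t ^ 2) ^ 2)
  have hden := (hsq.const_add 1).fun_pow 4
  refine ((hnum.fun_div hden (pow_ne_zero 4 hs)).div_const μ).congr_deriv ?_
  congr 1
  field_simp
  push_cast
  ring

lemma hasDerivAt_snd (μ δ s t : ℝ) :
    HasDerivAt (fun x => Rplus μ δ s x)
      (12 * t * (1 - t ^ 2) * ((μ ^ 2 + 4 * δ ^ 2) * (1 - t ^ 2) * (1 - 5 * s ^ 2)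
        - μ ^ 2 * (1 - s ^ 2) ^ 2) / (1 + s ^ 2) ^ 4 / μ) t := by
  simp only [eq_div_div]
  have hu : HasDerivAt (fun x : ℝ => 1 - x ^ 2) (-(2 * t)) t := by
    simpa using (hasDerivAt_pow 2 t).const_sub 1
  have hnum := (hu.fun_pow 2).fun_mul ((((hu.const_mul (μ ^ 2 + 4 * δ ^ 2)).const_mul 2).mul_const
    (5 * s ^ 2 - 1)).add_const (3 * μ ^ 2 * (1 - s ^ 2) ^ 2))
  refine ((hnum.div_const ((1 + s ^ 2) ^ 4)).div_const μ).congr_deriv ?_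
  push_cast
  ring

section CriticalPoints

variable {μ δ s t : ℝ}

lemma deriv_fst_eq_zero_iff (hμ : μ ≠ 0) (ht : 1 - t ^ 2 ≠ 0) :
    deriv (fun x => Rplus μ δ x t) s = 0 ↔
      s = 0 ∨ (μ ^ 2 + 4 * δ ^ 2) * (1 - t ^ 2) * (3 - 5 * s ^ 2) =
        μ ^ 2 * (1 - s ^ 2) * (3 - s ^ 2) := by
  have hs : 1 + s ^ 2 ≠ 0 := by positivity
  rw [(hasDerivAt_fst μ δ s t).deriv, div_eq_zero_iff, div_eq_zero_iff, mul_eq_zero, sub_eq_zero]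
  simp only [mul_eq_zero, hμ, hs, ht, OfNat.ofNat_ne_zero, pow_eq_zero_iff, ne_eq,
    not_false_eq_true, or_false, false_or]

lemma deriv_snd_eq_zero_iff (hμ : μ ≠ 0) (ht₀ : t ≠ 0) (ht : 1 - t ^ 2 ≠ 0) :
    deriv (fun x => Rplus μ δ s x) t = 0 ↔
      (μ ^ 2 + 4 * δ ^ 2) * (1 - t ^ 2) * (1 - 5 * s ^ 2) = μ ^ 2 * (1 - s ^ 2) ^ 2 := by
  have hs : 1 + s ^ 2 ≠ 0 := by positivity
  rw [(hasDerivAt_snd μ δ s t).deriv, div_eq_zero_iff, div_eq_zero_iff, mul_eq_zero, sub_eq_zero]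
  simp only [mul_eq_zero, hμ, hs, ht₀, ht, OfNat.ofNat_ne_zero, pow_eq_zero_iff, ne_eq,
    not_false_eq_true, or_false, false_or]

theorem gradient_eq_zero_iff (hμ : μ ≠ 0) (ht₀ : t ≠ 0) (ht : 1 - t ^ 2 ≠ 0) :
    (deriv (fun x => Rplus μ δ x t) s = 0 ∧ deriv (fun x => Rplus μ δ s x) t = 0) ↔
      s = 0 ∧ (μ ^ 2 + 4 * δ ^ 2) * t ^ 2 = (2 * δ) ^ 2 := by
  have hv : (μ ^ 2 + 4 * δ ^ 2) * (1 - t ^ 2) ≠ 0 := mul_ne_zero (by positivity) ht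
  rw [deriv_fst_eq_zero_iff hμ ht, deriv_snd_eq_zero_iff hμ ht₀ ht]
  constructor
  · rintro ⟨hfst, hsnd⟩
    obtain rfl : s = 0 :=
      hfst.elim id fun h => pow_eq_zero_iff two_ne_zero |>.1 <|
        eq_zero_of_critical_equations hv hsnd h
    exact ⟨rfl, by linear_combination -hsnd⟩
  · rintro ⟨rfl, h⟩
    exact ⟨Or.inl rfl, by linear_combination -h⟩

theorem gradient_ne_zero (hμ : μ ≠ 0) (ht₀ : 0 < t) (ht : t < 2 * δ / √(4 * δ ^ 2 + μ ^ 2)) :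
    ¬ (deriv (fun x => Rplus μ δ x t) s = 0 ∧ deriv (fun x => Rplus μ δ s x) t = 0) := by
  have hlt : (4 * δ ^ 2 + μ ^ 2) * t ^ 2 < (2 * δ) ^ 2 :=
    mul_sq_lt_sq_of_lt_div_sqrt (by positivity) ht₀.le ht
  have ht₁ : 1 - t ^ 2 ≠ 0 := by
    intro h
    rw [← sub_eq_zero.1 h] at hlt
    linarith [sq_nonneg μ]
  rw [gradient_eq_zero_iff hμ ht₀.ne' ht₁]
  rintro ⟨-, h⟩
  linarith

theorem not_isLocalExtr (hμ : μ ≠ 0) (ht₀ : 0 < t) (ht : t < 2 * δ / √(4 * δ ^ 2 + μ ^ 2)) :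
    ¬ IsLocalExtr (fun q : ℝ × ℝ => Rplus μ δ q.1 q.2) (s, t) := fun h =>
  gradient_ne_zero hμ ht₀ ht
    ⟨(h.comp_continuous (g := fun x => (x, t)) (by fun_prop)).deriv_eq_zero,
      (h.comp_continuous (g := fun x => (s, x)) (by fun_prop)).deriv_eq_zero⟩

end CriticalPoints

end Rplus

theorem stmt_19_general (μ δ t_o : ℝ) (hμ : μ ≠ 0)
    (hto : t_o = 2 * δ / √(4 * δ ^ 2 + μ ^ 2)) :
    (∀ s t : ℝ, 0 < t → t < t_o →
      ¬ (deriv (fun x : ℝ => Rplus μ δ x t) s = 0 ∧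
         deriv (fun x : ℝ => Rplus μ δ s x) t = 0)) ∧
    (∀ D : Set (ℝ × ℝ), Set.MapsTo Prod.snd D (Set.Icc 0 t_o) → ∀ p ∈ D,
      IsExtrOn (fun q : ℝ × ℝ => Rplus μ δ q.1 q.2) D p → p ∈ frontier D) := by
  subst hto
  refine ⟨fun s t ht₀ ht => Rplus.gradient_ne_zero hμ ht₀ ht, fun D hD p hp hext => ?_⟩
  refine ⟨subset_closure hp, fun hint => ?_⟩
  have hstrip : p.2 ∈ Set.Ioo 0 (2 * δ / √(4 * δ ^ 2 + μ ^ 2)) :=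
    interior_Icc (α := ℝ) ▸ isOpenMap_snd.mapsTo_interior hD hint
  exact Rplus.not_isLocalExtr hμ hstrip.1 hstrip.2
    (hext.isLocalExtr (mem_interior_iff_mem_nhds.1 hint))

/-- step (a1) of Case (B) of Theorem 1.3(iii): at every interior point
of `D̃ = {0 ≤ t ≤ t_o, |s| ≤ t}` (with `t_o = 2δ/√(4δ²+μ²)`) the gradient of `R̃` is
nonzero; consequently any max or min of `R̃` on `D̃` is attained on the boundary
`{|s| = t} ∪ {t = t_o}`. -/
theorem stmt_19 (μ δ t_o : ℝ) (hμ : 0 < μ) (hδ : 0 < δ)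
    (hto : t_o = 2 * δ / Real.sqrt (4 * δ ^ 2 + μ ^ 2)) :
    (∀ s t : ℝ, 0 < t → t < t_o → |s| < t →
      ¬ (deriv (fun x : ℝ => Rplus μ δ x t) s = 0 ∧
         deriv (fun x : ℝ => Rplus μ δ s x) t = 0)) ∧
    (∀ p : ℝ × ℝ,
      p ∈ {q : ℝ × ℝ | 0 ≤ q.2 ∧ q.2 ≤ t_o ∧ |q.1| ≤ q.2} →
      (IsMaxOn (fun q : ℝ × ℝ => Rplus μ δ q.1 q.2)
          {q : ℝ × ℝ | 0 ≤ q.2 ∧ q.2 ≤ t_o ∧ |q.1| ≤ q.2} p ∨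
       IsMinOn (fun q : ℝ × ℝ => Rplus μ δ q.1 q.2)
          {q : ℝ × ℝ | 0 ≤ q.2 ∧ q.2 ≤ t_o ∧ |q.1| ≤ q.2} p) →
      (|p.1| = p.2 ∨ p.2 = t_o)) := by
  obtain ⟨hgrad, hextr⟩ := stmt_19_general μ δ t_o hμ.ne' hto
  exact ⟨fun s t ht₀ ht _ => hgrad s t ht₀ ht, fun p hp hpextr => frontier_truncated_cone_subset t_o
    (hextr _ (fun q hq => ⟨hq.1, hq.2.1⟩) p hp hpextr.symm)⟩
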